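/- Let x ∈ [-1,1], X = {x}, and suppose t = arccos(x)/(2π) is irrational. Then the supremum of λ(I) over all Lebesgue measurable X-avoiding subsets I of the unit circle S^1 equals 1/2; that is, every measurable X-avoiding set has λ(I) ≤ 1/2, and for every ε > 0 there exists a measurable X-avoiding set I ⊆ S^1 with λ(I) > 1/2 − ε. -/

import Mathlib

open MeasureTheory Metric Matrix Filter
open scoped RealInnerProductSpace ENNReal

noncomputable section

/-- `ℝ^n` as a Euclidean space. -/
abbrev Eucl (n : ℕ) : Type := EuclideanSpace ℝ (Fin n)

/-- The unit sphere `S^{n-1}` in `ℝ^n`. -/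
abbrev Sph (n : ℕ) := Metric.sphere (0 : Eucl n) 1

/-- The Lebesgue surface measure on the unit sphere `S^{n-1}`, normalised so that the
total measure of the sphere is `1`. -/
def sphMeasure (n : ℕ) : Measure (Sph n) :=
  (((volume : Measure (Eucl n)).toSphere) Set.univ)⁻¹ • (volume : Measure (Eucl n)).toSphere

/-- A subset `I` of the sphere is `X`-avoiding if `⟪ξ, η⟫ ∉ X` for all `ξ, η ∈ I`. -/
def Avoids {n : ℕ} (X : Set ℝ) (I : Set (Sph n)) : Prop :=
  ∀ ξ ∈ I, ∀ η ∈ I, ⟪(ξ : Eucl n), (η : Eucl n)⟫ ∉ X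

/-!
Identify the circle with the unit complex numbers, and let `u = exp (i arccos x)`. A set avoids
`{x}` exactly when it is disjoint from its image under the rotation by `u`; as rotations preserve
arc length, such a set fills at most half of the circle.

For the lower bound, let `A` be a half-open half circle, which the antipodal map exchanges with its
complement. If `u ^ m` is close to `-1`, then `A \ u⁻ᵐA` has almost the measure of `A`, because
translation is continuous in measure. Rotating `z` by `u` rotates `z ^ m` by `u ^ m`, so
`{z | z ^ m ∈ A \ u⁻ᵐA}` is disjoint from its rotation by `u`, and it has the same measure as
`A \ u⁻ᵐA` because the power map preserves Haar measure. Powers of `u` approach `-1` when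
`arccos x / 2π` is irrational, and also when it is rational with even denominator.
-/

section HalfMeasure

variable {α : Type*} [MeasurableSpace α] {μ : Measure α} [IsProbabilityMeasure μ] {f : α → α}
  {s : Set α}

theorem measure_le_half_of_disjoint_preimage (hf : MeasurePreserving f μ μ) (hs : MeasurableSet s)
    (hdisj : Disjoint s (f ⁻¹' s)) : μ s ≤ 1 / 2 := by
  have htwice : μ s + μ s ≤ 1 := calc
    μ s + μ s = μ s + μ (f ⁻¹' s) := by rw [hf.measure_preimage hs.nullMeasurableSet]
    _ = μ (s ∪ f ⁻¹' s) := (measure_union hdisj (hf.measurable hs)).symm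
    _ ≤ 1 := prob_le_one
  rwa [ENNReal.le_div_iff_mul_le (by simp) (by simp), mul_two]

theorem measure_eq_half_of_preimage_eq_compl (hf : MeasurePreserving f μ μ) (hs : MeasurableSet s)
    (hcompl : f ⁻¹' s = sᶜ) : μ s = 1 / 2 := by
  have htwice : μ s + μ s = 1 := calc
    μ s + μ s = μ s + μ (f ⁻¹' s) := by rw [hf.measure_preimage hs.nullMeasurableSet]
    _ = 1 := by rw [hcompl, prob_add_prob_compl hs]
  rwa [ENNReal.eq_div_iff (by simp) (by simp), two_mul]

end HalfMeasure

section TopologicalGroup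

open scoped Topology symmDiff

variable {G : Type*} [TopologicalSpace G] [MeasurableSpace G] [BorelSpace G] {A : Set G} {u w : G}

theorem tendsto_measure_sdiff_preimage_mul_left [Group G] [IsTopologicalGroup G] {μ : Measure G}
    [IsFiniteMeasure μ] [μ.InnerRegularCompactLTTop] [μ.IsMulLeftInvariant] (hA : MeasurableSet A)
    (hdisj : Disjoint A ((w * ·) ⁻¹' A)) :
    Tendsto (fun v ↦ μ (A \ ((v * ·) ⁻¹' A))) (𝓝 w) (𝓝 (μ A)) := by
  have hcont : Continuous (ContinuousMap.mulLeft : G → C(G, G)) :=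
    ContinuousMap.continuous_of_continuous_uncurry _ (continuous_fst.mul continuous_snd)
  have hsymm : Tendsto (fun v ↦ μ (((v * ·) ⁻¹' A) ∆ ((w * ·) ⁻¹' A))) (𝓝 w) (𝓝 0) :=
    tendsto_measure_symmDiff_preimage_nhds_zero (f := ContinuousMap.mulLeft)
      (g := ContinuousMap.mulLeft w) (hcont.tendsto w)
      (.of_forall (measurePreserving_mul_left μ)) (measurePreserving_mul_left μ w)
      hA.nullMeasurableSet (measure_ne_top μ A)
  have hlower (v : G) : μ A - μ (((v * ·) ⁻¹' A) ∆ ((w * ·) ⁻¹' A)) ≤ μ (A \ ((v * ·) ⁻¹' A)) := by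
    have hcover : A ⊆ A \ ((v * ·) ⁻¹' A) ∪ ((v * ·) ⁻¹' A) ∆ ((w * ·) ⁻¹' A) := by
      intro z hz
      by_cases hvz : v * z ∈ A
      · exact .inr (.inl ⟨hvz, Set.disjoint_left.1 hdisj hz⟩)
      · exact .inl ⟨hz, hvz⟩
    exact tsub_le_iff_right.2 ((measure_mono hcover).trans (measure_union_le _ _))
  have hsub := ENNReal.Tendsto.sub (tendsto_const_nhds (x := μ A)) hsymm
    (.inl (measure_ne_top μ A))
  rw [tsub_zero] at hsub
  exact tendsto_of_tendsto_of_tendsto_of_le_of_le hsub tendsto_const_nhds hlower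
    fun v ↦ measure_mono Set.sdiff_subset

theorem exists_disjoint_preimage_mul_left_lt_measure [CommGroup G] [IsTopologicalGroup G]
    [CompactSpace G] [RootableBy G ℤ] {μ : Measure G} [μ.IsHaarMeasure]
    [μ.InnerRegularCompactLTTop] (hw : w ∈ closure (Subgroup.zpowers u : Set G))
    (hA : MeasurableSet A) (hdisj : Disjoint A ((w * ·) ⁻¹' A)) {c : ℝ≥0∞} (hc : c < μ A) :
    ∃ I : Set G, MeasurableSet I ∧ Disjoint I ((u * ·) ⁻¹' I) ∧ c < μ I := by
  have hnear : ∀ᶠ v in 𝓝 w, c < μ (A \ ((v * ·) ⁻¹' A)) :=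
    (tendsto_measure_sdiff_preimage_mul_left hA hdisj).eventually_const_lt hc
  obtain ⟨_, ⟨m, rfl⟩, hm⟩ := (mem_closure_iff_frequently.1 hw).and_eventually hnear |>.exists
  have hm₀ : m ≠ 0 := by
    rintro rfl
    simp at hm
  have hmeas : MeasurableSet (A \ ((u ^ m * ·) ⁻¹' A)) :=
    hA.diff (measurable_const_mul (u ^ m) hA)
  have hpow : MeasurePreserving (fun z : G ↦ z ^ m) μ μ :=
    Measure.measurePreserving_zpow μ hm₀
  refine ⟨(· ^ m) ⁻¹' (A \ ((u ^ m * ·) ⁻¹' A)), hpow.measurable hmeas, ?_, ?_⟩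
  · refine Set.disjoint_left.2 fun z hz huz ↦ hz.2 ?_
    simpa only [Set.mem_preimage, mul_zpow] using huz.1
  · rwa [hpow.measure_preimage hmeas.nullMeasurableSet]

end TopologicalGroup

section UnitSphere

open scoped Pointwise

variable {E F : Type*} [NormedAddCommGroup E] [NormedSpace ℝ E] [NormedAddCommGroup F]
  [NormedSpace ℝ F]

/-- The homeomorphism between unit spheres induced by a linear isometry equivalence. -/
def unitSphereHomeomorph (L : E ≃ₗᵢ[ℝ] F) : sphere (0 : E) 1 ≃ₜ sphere (0 : F) 1 :=
  L.toHomeomorph.subtype fun x ↦ by simp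

theorem coe_unitSphereHomeomorph (L : E ≃ₗᵢ[ℝ] F) (x : sphere (0 : E) 1) :
    (unitSphereHomeomorph L x : F) = L x :=
  rfl

theorem Ioo_smul_image_preimage_unitSphereHomeomorph (L : E ≃ₗᵢ[ℝ] F)
    (s : Set (sphere (0 : F) 1)) :
    Set.Ioo (0 : ℝ) 1 • ((↑) '' (unitSphereHomeomorph L ⁻¹' s) : Set E) =
      L ⁻¹' (Set.Ioo (0 : ℝ) 1 • ((↑) '' s : Set F)) := by
  have hcoe : ((↑) '' (unitSphereHomeomorph L ⁻¹' s) : Set E) = L.symm '' ((↑) '' s) := by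
    rw [← Homeomorph.image_symm, Set.image_image, Set.image_image]
    rfl
  rw [hcoe]
  calc
    Set.Ioo (0 : ℝ) 1 • (L.symm '' ((↑) '' s) : Set E) = L.symm '' (Set.Ioo (0 : ℝ) 1 • (↑) '' s) :=
      (Set.image_image2_distrib_right fun r v ↦ map_smul L.symm r v).symm
    _ = L ⁻¹' (Set.Ioo (0 : ℝ) 1 • (↑) '' s) := L.symm.image_eq_preimage_symm _

theorem measurePreserving_unitSphereHomeomorph [MeasurableSpace E] [BorelSpace E]
    [MeasurableSpace F] [BorelSpace F] {μ : Measure E} {ν : Measure F} (L : E ≃ₗᵢ[ℝ] F)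
    (hL : MeasurePreserving L μ ν) :
    MeasurePreserving (unitSphereHomeomorph L) μ.toSphere ν.toSphere := by
  have hmeas : Measurable (unitSphereHomeomorph L) := (unitSphereHomeomorph L).measurable
  refine ⟨hmeas, Measure.ext fun s hs ↦ ?_⟩
  rw [Measure.map_apply hmeas hs, Measure.toSphere_apply' _ (hmeas hs),
    Measure.toSphere_apply' _ hs, Ioo_smul_image_preimage_unitSphereHomeomorph,
    L.toLinearEquiv.finrank_eq, hL.measure_preimage_emb L.toHomeomorph.measurableEmbedding]

instance (n : ℕ) [NeZero n] : IsProbabilityMeasure (sphMeasure n) := by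
  have : NeZero (volume : Measure (Eucl n)).toSphere := ⟨Measure.toSphere_ne_zero _⟩
  exact isProbabilityMeasureSMul

theorem measurePreserving_unitSphereHomeomorph_sphMeasure {n : ℕ} (L : Eucl n ≃ₗᵢ[ℝ] Eucl n) :
    MeasurePreserving (unitSphereHomeomorph L) (sphMeasure n) (sphMeasure n) :=
  (measurePreserving_unitSphereHomeomorph L L.measurePreserving).smul_measure _

end UnitSphere

section CircleMeasure

instance : MeasurableSpace Circle := borel Circle

instance : BorelSpace Circle := ⟨rfl⟩

/-- The standard identification of the circle group in `ℂ` with the unit sphere of `ℝ²`. -/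
def circleHomeomorph : Circle ≃ₜ Sph 2 :=
  unitSphereHomeomorph Complex.orthonormalBasisOneI.repr

theorem coe_circleHomeomorph (z : Circle) :
    (circleHomeomorph z : Eucl 2) = Complex.orthonormalBasisOneI.repr (z : ℂ) :=
  rfl

theorem inner_circleHomeomorph (z w : Circle) :
    ⟪(circleHomeomorph z : Eucl 2), (circleHomeomorph w : Eucl 2)⟫ =
      ((w / z : Circle) : ℂ).re := by
  rw [coe_circleHomeomorph, coe_circleHomeomorph, LinearIsometryEquiv.inner_map_map,
    Complex.inner, div_eq_mul_inv, Circle.coe_mul, Circle.coe_inv_eq_conj]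

/-- The normalised arc length on the circle group, transported from `S¹ ⊆ ℝ²` so that the theory of
Haar measures applies to it. -/
def circleMeasure : Measure Circle := (sphMeasure 2).map circleHomeomorph.symm

theorem measurePreserving_circleHomeomorph_symm :
    MeasurePreserving circleHomeomorph.symm (sphMeasure 2) circleMeasure :=
  circleHomeomorph.symm.measurable.measurePreserving _

theorem measurePreserving_circleHomeomorph :
    MeasurePreserving circleHomeomorph circleMeasure (sphMeasure 2) :=
  measurePreserving_circleHomeomorph_symm.symm circleHomeomorph.symm.toMeasurableEquiv

instance : IsProbabilityMeasure circleMeasure :=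
  Measure.isProbabilityMeasure_map circleHomeomorph.symm.measurable.aemeasurable

instance : circleMeasure.IsMulLeftInvariant where
  map_mul_left_eq_self u := by
    let L : Eucl 2 ≃ₗᵢ[ℝ] Eucl 2 := Complex.orthonormalBasisOneI.repr.symm.trans
      ((rotation u).trans Complex.orthonormalBasisOneI.repr)
    have hconj : (u * ·) = circleHomeomorph.symm ∘ unitSphereHomeomorph L ∘ circleHomeomorph := by
      ext z : 1
      refine circleHomeomorph.injective (Subtype.ext ?_)
      simp only [L, Function.comp_apply, Homeomorph.apply_symm_apply, coe_unitSphereHomeomorph,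
        coe_circleHomeomorph, LinearIsometryEquiv.trans_apply,
        LinearIsometryEquiv.symm_apply_apply, rotation_apply, Circle.coe_mul]
    rw [hconj]
    exact (measurePreserving_circleHomeomorph_symm.comp
      ((measurePreserving_unitSphereHomeomorph_sphMeasure L).comp
        measurePreserving_circleHomeomorph)).map_eq

instance : circleMeasure.IsHaarMeasure :=
  Measure.isHaarMeasure_of_isCompact_nonempty_interior _ Set.univ isCompact_univ
    (by simp) (by simp) (by simp)

end CircleMeasure

section Circle

instance : RootableBy Circle ℤ :=
  rootableByOfPowLeftSurj _ _ fun {n} hn z ↦ by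
    obtain ⟨t, rfl⟩ := Circle.exp_surjective z
    refine ⟨Circle.exp (t / n), ?_⟩
    simp only [← Circle.exp_intCast_mul]
    field_simp

theorem dense_zpowers_circleExp {θ : ℝ} (hθ : Irrational (θ / (2 * Real.pi))) :
    Dense (Subgroup.zpowers (Circle.exp θ) : Set Circle) := by
  have hdense := Circle.exp_surjective.denseRange.dense_image Circle.exp.continuous
    (dense_addSubgroupClosure_pair_iff.2 hθ)
  refine hdense.mono ?_
  rintro _ ⟨_, hy, rfl⟩
  obtain ⟨m, k, rfl⟩ := AddSubgroup.mem_closure_pair.1 hy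
  exact ⟨m, by simp [Circle.exp_add]⟩

/-- The upper half of the circle group, containing the endpoint `1` but not `-1` so that the
antipodal map takes it exactly to its complement. -/
def upperHalfCircle : Set Circle :=
  {z | 0 < (z : ℂ).im ∨ (z : ℂ).im = 0 ∧ 0 < (z : ℂ).re}

theorem measurableSet_upperHalfCircle : MeasurableSet upperHalfCircle := by
  have hcoe : Continuous fun z : Circle ↦ (z : ℂ) := continuous_subtype_val
  have him := Complex.measurable_im.comp hcoe.measurable
  have hre := Complex.measurable_re.comp hcoe.measurable
  exact (measurableSet_lt measurable_const him).union
    ((measurableSet_eq_fun him measurable_const).inter (measurableSet_lt measurable_const hre))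

theorem preimage_neg_one_mul_upperHalfCircle :
    (-1 * ·) ⁻¹' upperHalfCircle = upperHalfCircleᶜ := by
  ext z
  have hz : ¬((z : ℂ).re = 0 ∧ (z : ℂ).im = 0) := fun h ↦ z.coe_ne_zero (Complex.ext h.1 h.2)
  simp only [upperHalfCircle, Set.mem_preimage, Set.mem_compl_iff, Set.mem_ofPred_eq, neg_mul,
    one_mul, Circle.coe_neg, Complex.neg_im, Complex.neg_re]
  grind

theorem circleMeasure_upperHalfCircle : circleMeasure upperHalfCircle = 1 / 2 :=
  measure_eq_half_of_preimage_eq_compl (measurePreserving_mul_left _ (-1))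
    measurableSet_upperHalfCircle preimage_neg_one_mul_upperHalfCircle

theorem circle_re_eq_re_iff {z w : Circle} : (z : ℂ).re = (w : ℂ).re ↔ z = w ∨ z = w⁻¹ := by
  constructor
  · intro hre
    have hz := z.normSq_coe
    have hw := w.normSq_coe
    rw [Complex.normSq_apply] at hz hw
    have him : (z : ℂ).im * (z : ℂ).im = (w : ℂ).im * (w : ℂ).im := by
      rw [hre] at hz
      linarith
    refine (mul_self_eq_mul_self_iff.1 him).imp (fun h ↦ ?_) fun h ↦ ?_
    · exact Circle.ext (Complex.ext hre h)
    · refine Circle.ext ?_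
      rw [Circle.coe_inv_eq_conj]
      exact Complex.ext hre h
  · rintro (rfl | rfl)
    · rfl
    · rw [Circle.coe_inv_eq_conj, Complex.conj_re]

theorem avoids_singleton_re_iff {u : Circle} {I : Set (Sph 2)} :
    Avoids {(u : ℂ).re} I ↔
      Disjoint (circleHomeomorph ⁻¹' I) ((u * ·) ⁻¹' (circleHomeomorph ⁻¹' I)) := by
  simp only [Avoids, Set.mem_singleton_iff, circleHomeomorph.surjective.forall,
    inner_circleHomeomorph, circle_re_eq_re_iff, Set.disjoint_left, Set.mem_preimage]
  constructor
  · intro havoid z hz huz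
    exact havoid z hz (u * z) huz (.inl (mul_div_cancel_right u z))
  · rintro hdisj z hz w hw (hdiv | hdiv)
    · exact hdisj hz (by rwa [← hdiv, div_mul_cancel])
    · exact hdisj hw (by rwa [← inv_eq_iff_eq_inv.2 hdiv, inv_div, div_mul_cancel])

end Circle

theorem sphMeasure_le_half_of_avoids_singleton_re (u : Circle) {I : Set (Sph 2)}
    (hI : MeasurableSet I) (havoid : Avoids {(u : ℂ).re} I) : sphMeasure 2 I ≤ 1 / 2 := by
  rw [← measurePreserving_circleHomeomorph.measure_preimage hI.nullMeasurableSet]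
  exact measure_le_half_of_disjoint_preimage (measurePreserving_mul_left circleMeasure u)
    (circleHomeomorph.measurable hI) (avoids_singleton_re_iff.1 havoid)

theorem exists_avoids_singleton_re_lt_sphMeasure {u : Circle}
    (hu : -1 ∈ closure (Subgroup.zpowers u : Set Circle)) {c : ℝ≥0∞} (hc : c < 1 / 2) :
    ∃ I : Set (Sph 2), MeasurableSet I ∧ Avoids {(u : ℂ).re} I ∧ c < sphMeasure 2 I := by
  obtain ⟨J, hJ, hdisj, hcJ⟩ := exists_disjoint_preimage_mul_left_lt_measure hu
    measurableSet_upperHalfCircle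
    (preimage_neg_one_mul_upperHalfCircle ▸ disjoint_compl_right)
    (circleMeasure_upperHalfCircle ▸ hc)
  refine ⟨circleHomeomorph.symm ⁻¹' J, circleHomeomorph.symm.measurable hJ, ?_, ?_⟩
  · rwa [avoids_singleton_re_iff, ← Set.preimage_comp, circleHomeomorph.symm_comp_self,
      Set.preimage_id]
  · rwa [measurePreserving_circleHomeomorph_symm.measure_preimage hJ.nullMeasurableSet]

theorem circle_sup_irrational_general (x : ℝ) (hx : x ∈ Set.Icc (-1 : ℝ) 1)
    (hclosure : -1 ∈ closure (Subgroup.zpowers (Circle.exp (Real.arccos x)) : Set Circle)) :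
    (∀ I : Set (Sph 2), MeasurableSet I → Avoids {x} I → sphMeasure 2 I ≤ 1 / 2) ∧
    (∀ ε : ℝ≥0∞, 0 < ε → ∃ I : Set (Sph 2),
      MeasurableSet I ∧ Avoids {x} I ∧ 1 / 2 - ε < sphMeasure 2 I) := by
  have hre : (Circle.exp (Real.arccos x) : ℂ).re = x := by
    rw [Circle.coe_exp, Complex.exp_ofReal_mul_I_re, Real.cos_arccos hx.1 hx.2]
  refine ⟨fun I hI havoid ↦ ?_, fun ε hε ↦ ?_⟩
  · exact sphMeasure_le_half_of_avoids_singleton_re _ hI (hre.symm ▸ havoid)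
  · simpa only [hre] using exists_avoids_singleton_re_lt_sphMeasure hclosure
      (ENNReal.sub_lt_self (by simp) (by simp) hε.ne')

/-- If `x ∈ [-1,1]` and `t = arccos x / (2π)` is irrational, then the supremum of the
normalised measures of measurable `{x}`-avoiding subsets of the unit circle `S^1` equals
`1/2`: every measurable `{x}`-avoiding set has measure at most `1/2`, and for every `ε > 0`
there is a measurable `{x}`-avoiding set of measure greater than `1/2 - ε`. -/
theorem circle_sup_irrational (x : ℝ) (hx : x ∈ Set.Icc (-1 : ℝ) 1)
    (hirr : Irrational (Real.arccos x / (2 * Real.pi))) :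
    (∀ I : Set (Sph 2), MeasurableSet I → Avoids {x} I → sphMeasure 2 I ≤ 1 / 2) ∧
    (∀ ε : ℝ≥0∞, 0 < ε → ∃ I : Set (Sph 2),
      MeasurableSet I ∧ Avoids {x} I ∧ 1 / 2 - ε < sphMeasure 2 I) := by
  exact circle_sup_irrational_general x hx (dense_zpowers_circleExp hirr (-1))
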